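/- For each k ≥ 1 and |q| < 1: Σ_{λ: l(λ) ≤ k} q^{|λ| + n_2(λ) - 2λ_1} (1 - q^{2λ_1}) / ((-q;q)_{λ_k} (q;q)_λ) = (q^{2k+2}, q^{2k-1}, q^3; q^{2k+2})_∞ / (q;q)_∞. -/

import Mathlib

/-- Finite q-Pochhammer symbol `(x;q)_n = ∏_{k=0}^{n-1} (1 - x q^k)`. -/
noncomputable def qPoch (x q : ℂ) (n : ℕ) : ℂ := ∏ k ∈ Finset.range n, (1 - x * q ^ k)

/-- Infinite q-Pochhammer symbol `(x;q)_∞ = ∏_{k≥0} (1 - x q^k)`. -/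
noncomputable def qPochInf (x q : ℂ) : ℂ := ∏' k : ℕ, (1 - x * q ^ k)

/-- Partitions with at most `k` (positive) parts: antitone sequences of naturals vanishing
from index `k` on; `l 0` is the largest part `λ_1`, and `l (k-1)` is `λ_k`. -/
def PartK (k : ℕ) : Type := {l : ℕ → ℕ // Antitone l ∧ ∀ i, k ≤ i → l i = 0}

/-- `|λ| = Σ_i λ_i`. -/
def wtK (k : ℕ) (l : PartK k) : ℕ := ∑ i ∈ Finset.range k, l.1 i

/-- `n_2(λ) = Σ_i λ_i^2`. -/
def n2K (k : ℕ) (l : PartK k) : ℕ := ∑ i ∈ Finset.range k, (l.1 i) ^ 2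

/-- `n(λ) = Σ_i binom(λ_i, 2)`. -/
def nK (k : ℕ) (l : PartK k) : ℕ := ∑ i ∈ Finset.range k, Nat.choose (l.1 i) 2

/-- `(x;q)_λ = ∏_{i=1}^{k} (x;q)_{λ_i - λ_{i+1}}` (with `λ_{k+1} = 0`). -/
noncomputable def pochK (x q : ℂ) (k : ℕ) (l : PartK k) : ℂ :=
  ∏ i ∈ Finset.range k, qPoch x q (l.1 i - l.1 (i + 1))

/-!
Weight the partitions by `f(λ₁) = q ^ (λ₁ ^ 2 - λ₁) (1 - q ^ (2 λ₁))` times factors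
`q ^ (λᵢ ^ 2 + λᵢ)`, `i ≥ 2`, so that the left side is a Bailey chain of length `k - 1` started at
`β_n = 1 / ((-q;q)_n (q;q)_n)`. Instead of moving the Bailey pair along the chain, sum over the
largest part first: this replaces `f` by a new weight whose conjugate Bailey sequence is
`q ^ (r ^ 2 + r) γ_r`. Hence the sum is `∑ r, α_r q ^ ((k - 1) (r ^ 2 + r)) γ_r`. Durfee's
rectangle identity evaluates `γ_r` as a multiple of `1 + y + y ^ 2` with `y = q ^ (2 r + 1)`, while
`α_r` contains `1 - y`; their product `1 - y ^ 3` turns the series into the one in Jacobi's triple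
product identity.
-/

section

open Finset Filter Topology

variable {q : ℂ}

/-- The reciprocal `1 / (q;q)_n`, whose denominator does not vanish for `‖q‖ < 1`. -/
noncomputable def invPoch (q : ℂ) (n : ℕ) : ℂ := (qPoch q q n)⁻¹

lemma norm_pow_lt_one (hq : ‖q‖ < 1) {n : ℕ} (hn : n ≠ 0) : ‖q ^ n‖ < 1 :=
  norm_pow q n ▸ pow_lt_one₀ (norm_nonneg q) hq hn

lemma one_sub_pow_ne_zero (hq : ‖q‖ < 1) {n : ℕ} (hn : n ≠ 0) : 1 - q ^ n ≠ 0 :=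
  sub_ne_zero.mpr fun h => (norm_pow_lt_one hq hn).ne (h ▸ norm_one)

lemma invPoch_zero (q : ℂ) : invPoch q 0 = 1 := by simp [invPoch, qPoch]

lemma one_sub_pow_mul_invPoch_succ (hq : ‖q‖ < 1) (n : ℕ) :
    (1 - q ^ (n + 1)) * invPoch q (n + 1) = invPoch q n := by
  have hne := one_sub_pow_ne_zero hq n.succ_ne_zero
  rw [invPoch, invPoch, qPoch, prod_range_succ, ← pow_succ', mul_inv_rev,
    mul_inv_cancel_left₀ hne, qPoch]

lemma tendsto_qPoch (hq : ‖q‖ < 1) (x : ℂ) :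
    Tendsto (qPoch x q) atTop (𝓝 (qPochInf x q)) := by
  have h : Multipliable fun n : ℕ => 1 - x * q ^ n := by
    simp only [sub_eq_add_neg]
    apply multipliable_one_add_of_summable
    simpa using (summable_geometric_of_lt_one (norm_nonneg _) hq).mul_left ‖x‖
  exact h.hasProd.tendsto_prod_nat

lemma qPochInf_self_ne_zero (hq : ‖q‖ < 1) : qPochInf q q ≠ 0 := by
  simp only [qPochInf, ← pow_succ', sub_eq_add_neg]
  refine tprod_one_add_ne_zero_of_summable (fun n => ?_) ?_
  · simpa only [← sub_eq_add_neg] using one_sub_pow_ne_zero hq n.succ_ne_zero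
  · simpa [pow_succ] using (summable_geometric_of_lt_one (norm_nonneg _) hq).mul_right ‖q‖

lemma tendsto_invPoch (hq : ‖q‖ < 1) :
    Tendsto (invPoch q) atTop (𝓝 (qPochInf q q)⁻¹) :=
  (tendsto_qPoch hq q).inv₀ (qPochInf_self_ne_zero hq)

lemma exists_norm_invPoch_le (hq : ‖q‖ < 1) : ∃ C, ∀ n, ‖invPoch q n‖ ≤ C := by
  obtain ⟨C, hC⟩ := (Metric.isBounded_range_of_tendsto _ (tendsto_invPoch hq)).exists_norm_le
  exact ⟨C, fun n => hC _ ⟨n, rfl⟩⟩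

lemma sq_eq_two_mul_choose_two_add (n : ℕ) : n ^ 2 = 2 * n.choose 2 + n := by
  rw [Nat.choose_two_right, Nat.mul_div_cancel' (Nat.even_mul_pred_self n).two_dvd]
  cases n with
  | zero => rfl
  | succ n => rw [Nat.add_sub_cancel]; ring

lemma choose_two_succ (n : ℕ) : (n + 1).choose 2 = n.choose 2 + n := by
  rw [Nat.choose_succ_succ', Nat.choose_one_right, add_comm]

lemma add_choose_two_eq (m n : ℕ) : (m + n).choose 2 = m.choose 2 + n.choose 2 + m * n := by
  have hm := sq_eq_two_mul_choose_two_add m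
  have hn := sq_eq_two_mul_choose_two_add n
  have hmn := sq_eq_two_mul_choose_two_add (m + n)
  nlinarith

lemma summable_pow_mul_pow_choose_two (hq : ‖q‖ < 1) (x : ℂ) :
    Summable fun n : ℕ => x ^ n * q ^ n.choose 2 := by
  have hlim : Tendsto (fun n => ‖x * q ^ n‖) atTop (𝓝 0) := by
    simpa using ((tendsto_pow_atTop_nhds_zero_of_norm_lt_one hq).const_mul x).norm
  refine summable_of_ratio_norm_eventually_le (r := 1 / 2) (by norm_num) ?_
  filter_upwards [hlim.eventually_le_const (by norm_num : (0 : ℝ) < 1 / 2)] with n hn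
  calc ‖x ^ (n + 1) * q ^ (n + 1).choose 2‖
      = ‖x * q ^ n‖ * ‖x ^ n * q ^ n.choose 2‖ := by
        rw [choose_two_succ, ← norm_mul]; ring_nf
    _ ≤ 1 / 2 * ‖x ^ n * q ^ n.choose 2‖ := by gcongr

lemma summable_pow_sq_add_mul (hq : ‖q‖ < 1) (c : ℕ) :
    Summable fun n : ℕ => q ^ (n ^ 2 + c * n) := by
  have hs := summable_pow_mul_pow_choose_two (norm_pow_lt_one hq two_ne_zero) (q ^ (c + 1))
  refine hs.congr fun n => ?_
  rw [sq_eq_two_mul_choose_two_add]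
  ring

lemma summable_mul_of_norm_le {ι : Type*} {f g : ι → ℂ} {C : ℝ} (hf : Summable f)
    (hg : ∀ i, ‖g i‖ ≤ C) : Summable fun i => f i * g i :=
  .of_norm_bounded (hf.norm.mul_right C) fun i =>
    (norm_mul_le _ _).trans (mul_le_mul_of_nonneg_left (hg i) (norm_nonneg _))

lemma sum_antidiagonal_succ_invPoch_mul_invPoch (hq : ‖q‖ < 1) (f : ℕ → ℂ) (n : ℕ) :
    (1 - q ^ (n + 1)) * ∑ p ∈ antidiagonal (n + 1), f p.1 * invPoch q p.1 * invPoch q p.2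
      = ∑ p ∈ antidiagonal n, (f p.1 + q ^ p.2 * f (p.1 + 1)) * invPoch q p.1 * invPoch q p.2 := by
  calc _ = ∑ p ∈ antidiagonal (n + 1), f p.1 * invPoch q p.1 * ((1 - q ^ p.2) * invPoch q p.2)
        + ∑ p ∈ antidiagonal (n + 1),
            q ^ p.2 * f p.1 * ((1 - q ^ p.1) * invPoch q p.1) * invPoch q p.2 := by
        rw [mul_sum, ← sum_add_distrib]
        refine sum_congr rfl fun p hp => ?_
        rw [← mem_antidiagonal.mp hp]
        ring
    _ = _ := by
        rw [Nat.sum_antidiagonal_succ', Nat.sum_antidiagonal_succ]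
        simp [one_sub_pow_mul_invPoch_succ hq, ← sum_add_distrib, add_mul]

lemma sum_antidiagonal_q_vandermonde (hq : ‖q‖ < 1) (n c : ℕ) :
    ∑ p ∈ antidiagonal n,
        q ^ (p.1 ^ 2 + c * p.1) * invPoch q (p.1 + c) * invPoch q p.1 * invPoch q p.2
      = invPoch q n * invPoch q (n + c) := by
  induction n generalizing c with
  | zero => simp [invPoch_zero]
  | succ n ih =>
    refine mul_left_cancel₀ (one_sub_pow_ne_zero hq n.succ_ne_zero) ?_
    rw [sum_antidiagonal_succ_invPoch_mul_invPoch hq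
      fun j => q ^ (j ^ 2 + c * j) * invPoch q (j + c)]
    calc _ = ∑ p ∈ antidiagonal n,
            q ^ (p.1 ^ 2 + c * p.1) * invPoch q (p.1 + c) * invPoch q p.1 * invPoch q p.2
          + q ^ (n + c + 1) * ∑ p ∈ antidiagonal n, q ^ (p.1 ^ 2 + (c + 1) * p.1) *
              invPoch q (p.1 + (c + 1)) * invPoch q p.1 * invPoch q p.2 := by
          rw [mul_sum, ← sum_add_distrib]
          refine sum_congr rfl fun p hp => ?_
          rw [← mem_antidiagonal.mp hp, show p.1 + 1 + c = p.1 + (c + 1) by ring]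
          ring
      _ = invPoch q n * (invPoch q (n + c) + q ^ (n + c + 1) * invPoch q (n + (c + 1))) := by
          rw [ih, ih]; ring
      _ = (1 - q ^ (n + 1)) * (invPoch q (n + 1) * invPoch q (n + 1 + c)) := by
          rw [← mul_assoc, one_sub_pow_mul_invPoch_succ hq,
            ← one_sub_pow_mul_invPoch_succ hq (n + c), ← add_assoc n c 1, add_right_comm n 1 c]
          ring

lemma sum_antidiagonal_rothe (hq : ‖q‖ < 1) (x : ℂ) (n : ℕ) :
    ∑ p ∈ antidiagonal n, (-x) ^ p.1 * q ^ p.1.choose 2 * invPoch q p.1 * invPoch q p.2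
      = qPoch x q n * invPoch q n := by
  induction n with
  | zero => simp [invPoch_zero, qPoch]
  | succ n ih =>
    refine mul_left_cancel₀ (one_sub_pow_ne_zero hq n.succ_ne_zero) ?_
    rw [sum_antidiagonal_succ_invPoch_mul_invPoch hq fun j => (-x) ^ j * q ^ j.choose 2]
    calc _ = (1 - x * q ^ n) * ∑ p ∈ antidiagonal n,
              (-x) ^ p.1 * q ^ p.1.choose 2 * invPoch q p.1 * invPoch q p.2 := by
          rw [mul_sum]
          refine sum_congr rfl fun p hp => ?_
          rw [← mem_antidiagonal.mp hp, choose_two_succ]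
          ring
      _ = (1 - q ^ (n + 1)) * (qPoch x q (n + 1) * invPoch q (n + 1)) := by
          rw [ih, mul_left_comm (1 - q ^ (n + 1)), one_sub_pow_mul_invPoch_succ hq, qPoch, qPoch,
            prod_range_succ]
          ring

lemma tendsto_sum_antidiagonal_mul {f u : ℕ → ℂ} {U : ℂ} (hf : Summable f)
    (hu : Tendsto u atTop (𝓝 U)) :
    Tendsto (fun n => ∑ p ∈ antidiagonal n, f p.1 * u p.2) atTop (𝓝 ((∑' j, f j) * U)) := by
  obtain ⟨C, hC⟩ := (Metric.isBounded_range_of_tendsto _ hu).exists_norm_le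
  have hdom := tendsto_tsum_of_dominated_convergence (𝓕 := atTop)
    (f := fun n j => if j ≤ n then f j * u (n - j) else 0) (g := fun j => f j * U)
    (hf.norm.mul_right C) (fun j => ?_) (Eventually.of_forall fun n j => ?_)
  · rw [← tsum_mul_right]
    refine hdom.congr fun n => ?_
    rw [Nat.sum_antidiagonal_eq_sum_range_succ_mk, tsum_eq_sum (s := range (n + 1))]
    · exact sum_congr rfl fun j hj => if_pos (Nat.lt_succ_iff.mp (mem_range.mp hj))
    · exact fun j hj => if_neg (by simpa using hj)
  · refine ((hu.comp (tendsto_sub_atTop_nat j)).const_mul (f j)).congr' ?_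
    filter_upwards [eventually_ge_atTop j] with n hn using (if_pos hn).symm
  · split_ifs
    · rw [norm_mul]
      gcongr
      exact hC _ ⟨_, rfl⟩
    · simpa using mul_nonneg (norm_nonneg _) ((norm_nonneg _).trans (hC _ ⟨0, rfl⟩))

lemma hasSum_durfee (hq : ‖q‖ < 1) (c : ℕ) :
    HasSum (fun n : ℕ => q ^ (n ^ 2 + c * n) * invPoch q (n + c) * invPoch q n)
      (qPochInf q q)⁻¹ := by
  obtain ⟨C, hC⟩ := exists_norm_invPoch_le hq
  have hs : Summable fun n : ℕ => q ^ (n ^ 2 + c * n) * invPoch q (n + c) * invPoch q n :=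
    summable_mul_of_norm_le (summable_mul_of_norm_le (summable_pow_sq_add_mul hq c)
      fun n => hC _) hC
  have hlim := tendsto_sum_antidiagonal_mul hs (tendsto_invPoch hq)
  simp only [sum_antidiagonal_q_vandermonde hq] at hlim
  have hlim' := (tendsto_invPoch hq).mul
    ((tendsto_invPoch hq).comp (tendsto_add_atTop_nat c))
  have hsum := mul_right_cancel₀ (inv_ne_zero (qPochInf_self_ne_zero hq))
    (tendsto_nhds_unique hlim hlim')
  exact hsum ▸ hs.hasSum

lemma hasSum_euler (hq : ‖q‖ < 1) (x : ℂ) :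
    HasSum (fun n : ℕ => (-x) ^ n * q ^ n.choose 2 * invPoch q n) (qPochInf x q) := by
  obtain ⟨C, hC⟩ := exists_norm_invPoch_le hq
  have hs := summable_mul_of_norm_le (summable_pow_mul_pow_choose_two hq (-x)) hC
  have hlim := tendsto_sum_antidiagonal_mul hs (tendsto_invPoch hq)
  simp only [sum_antidiagonal_rothe hq] at hlim
  have hsum := mul_right_cancel₀ (inv_ne_zero (qPochInf_self_ne_zero hq))
    (tendsto_nhds_unique hlim ((tendsto_qPoch hq x).mul (tendsto_invPoch hq)))
  exact hsum ▸ hs.hasSum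

lemma hasSum_tsum_diagonals {f : ℕ × ℕ → ℂ} (hf : Summable f) :
    HasSum (fun r => (∑' m, f (m + r, m)) + ∑' m, f (m, m + r + 1)) (∑' p, f p) := by
  let lower : ℕ × ℕ → ℕ × ℕ := fun p => (p.2 + p.1, p.2)
  let upper : ℕ × ℕ → ℕ × ℕ := fun p => (p.2, p.2 + p.1 + 1)
  have hlower : lower.Injective := by
    rintro ⟨r, m⟩ ⟨r', m'⟩ h
    simp only [lower, Prod.mk.injEq] at h ⊢
    omega
  have hupper : upper.Injective := by
    rintro ⟨r, m⟩ ⟨r', m'⟩ h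
    simp only [upper, Prod.mk.injEq] at h ⊢
    omega
  have hcompl : IsCompl (Set.range lower) (Set.range upper) := by
    refine ⟨Set.disjoint_left.mpr ?_, codisjoint_iff_le_sup.mpr fun p _ => ?_⟩
    · rintro _ ⟨p, rfl⟩ ⟨p', h⟩
      simp only [lower, upper, Prod.mk.injEq] at h
      omega
    · rcases le_or_gt p.2 p.1 with h | h
      · exact .inl ⟨(p.1 - p.2, p.2), Prod.ext (Nat.add_sub_cancel' h) rfl⟩
      · exact .inr ⟨(p.2 - p.1 - 1, p.1), Prod.ext rfl (by simp only [upper]; omega)⟩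
  have hsl := hf.comp_injective hlower
  have hsu := hf.comp_injective hupper
  rw [(HasSum.add_isCompl hcompl (hlower.hasSum_range_iff.mpr hsl.hasSum)
    (hupper.hasSum_range_iff.mpr hsu.hasSum)).tsum_eq]
  exact (hsl.hasSum.prod_fiberwise fun r => (hsl.prod_factor r).hasSum).add
    (hsu.hasSum.prod_fiberwise fun r => (hsu.prod_factor r).hasSum)

theorem hasSum_jacobi_triple_product (hq : ‖q‖ < 1) {a b : ℂ} (hab : a * b = q) :
    HasSum (fun r : ℕ => (-1) ^ r * (a ^ r * q ^ r.choose 2 - b ^ (r + 1) * q ^ (r + 1).choose 2))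
      (qPochInf q q * qPochInf a q * qPochInf b q) := by
  have ha := hasSum_euler hq a
  have hb := hasSum_euler hq b
  have hdiag {x y : ℂ} (hxy : x * y = q) (r : ℕ) :
      ∑' m, (-x) ^ (m + r) * q ^ (m + r).choose 2 * invPoch q (m + r) *
          ((-y) ^ m * q ^ m.choose 2 * invPoch q m)
        = (-x) ^ r * q ^ r.choose 2 * (qPochInf q q)⁻¹ := by
    rw [← ((hasSum_durfee hq r).mul_left _).tsum_eq]
    refine tsum_congr fun m => ?_
    have hpow : (-x) ^ m * (-y) ^ m = q ^ m := by rw [← mul_pow, neg_mul_neg, hxy]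
    rw [sq_eq_two_mul_choose_two_add, add_choose_two_eq, pow_add (-x)]
    linear_combination (-x) ^ r * q ^ (2 * m.choose 2 + r.choose 2 + m * r) * invPoch q m *
      invPoch q (m + r) * hpow
  have hprod := (hasSum_tsum_diagonals
    (summable_mul_of_summable_norm ha.summable.norm hb.summable.norm)).mul_left (qPochInf q q)
  rw [← tsum_mul_tsum_of_summable_norm ha.summable.norm hb.summable.norm, ha.tsum_eq,
    hb.tsum_eq, ← mul_assoc] at hprod
  refine hprod.congr_fun fun r => ?_
  have hupper : ∑' m, (-a) ^ m * q ^ m.choose 2 * invPoch q m *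
      ((-b) ^ (m + r + 1) * q ^ (m + r + 1).choose 2 * invPoch q (m + r + 1))
        = (-b) ^ (r + 1) * q ^ (r + 1).choose 2 * (qPochInf q q)⁻¹ :=
    .trans (tsum_congr fun m => mul_comm _ _) (hdiag (mul_comm a b ▸ hab) (r + 1))
  rw [hdiag hab, hupper]
  field_simp [qPochInf_self_ne_zero hq]
  ring

/-- `(α, β)` is a Bailey pair relative to `a = q ^ c`. The customary denominators
`(q;q)_{n-r} (aq;q)_{n+r}` become `(q;q)_{n-r} (q;q)_{n+r+c}`, the constant `(q;q)_c` being absorbed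
into `α`; on the antidiagonal, `p = (r, n - r)`. -/
def IsBaileyPair (q : ℂ) (c : ℕ) (α β : ℕ → ℂ) : Prop :=
  ∀ n, β n = ∑ p ∈ antidiagonal n, α p.1 * invPoch q (p.2 + 2 * p.1 + c) * invPoch q p.2

lemma one_sub_pow_mul_sum_antidiagonal_slaterE3 (hq : ‖q‖ < 1) (n : ℕ) :
    (1 - q ^ (2 * (n + 1))) * ∑ p ∈ antidiagonal (n + 1), (-1) ^ p.1 * q ^ p.1 ^ 2 *
        (1 - q ^ (2 * p.1 + 1)) * invPoch q (p.2 + 2 * p.1 + 1) * invPoch q p.2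
      = ∑ p ∈ antidiagonal n, (-1) ^ p.1 * q ^ p.1 ^ 2 * (1 - q ^ (2 * p.1 + 1)) *
          invPoch q (p.2 + 2 * p.1 + 1) * invPoch q p.2 := by
  calc _ = ∑ p ∈ antidiagonal (n + 1), (-1) ^ p.1 * q ^ p.1 ^ 2 * (1 - q ^ (2 * p.1 + 1)) *
            invPoch q (p.2 + 2 * p.1) * ((1 - q ^ p.2) * invPoch q p.2)
        + (∑ p ∈ antidiagonal (n + 1), (-1) ^ p.1 * q ^ (p.1 ^ 2 + 2 * p.1 + p.2) *
            (1 - q ^ (2 * p.1 + 2)) * invPoch q (p.2 + 2 * p.1 + 1) *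
              ((1 - q ^ p.2) * invPoch q p.2)
        + ∑ p ∈ antidiagonal (n + 1), (-1) ^ p.1 * q ^ (p.1 ^ 2 + p.2) *
            (1 - q ^ (2 * p.1)) * invPoch q (p.2 + 2 * p.1) * invPoch q p.2) := by
        rw [mul_sum, ← sum_add_distrib, ← sum_add_distrib]
        refine sum_congr rfl fun p hp => ?_
        rw [← mem_antidiagonal.mp hp, ← one_sub_pow_mul_invPoch_succ hq (p.2 + 2 * p.1)]
        ring
    -- The last two sums cancel after shifting `p.2` in the one and `p.1` in the other.
    _ = _ := by
        rw [add_eq_left.mpr, Nat.sum_antidiagonal_succ']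
        · simp [one_sub_pow_mul_invPoch_succ hq, add_right_comm _ 1]
        · rw [Nat.sum_antidiagonal_succ', Nat.sum_antidiagonal_succ]
          simp only [one_sub_pow_mul_invPoch_succ hq, pow_zero, sub_self, mul_zero, zero_mul,
            zero_add, add_zero, ← sum_add_distrib]
          refine sum_eq_zero fun p _ => ?_
          rw [show p.2 + 1 + 2 * p.1 + 1 = p.2 + 2 * (p.1 + 1) by ring]
          ring

/-- Slater's pair E(3), with `α` multiplied by `(q;q)_1`. -/
lemma isBaileyPair_slaterE3 (hq : ‖q‖ < 1) :
    IsBaileyPair q 1 (fun r => (-1) ^ r * q ^ r ^ 2 * (1 - q ^ (2 * r + 1)))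
      fun n => (qPoch (-q) q n * qPoch q q n)⁻¹ := by
  intro n
  induction n with
  | zero =>
    simpa [qPoch, invPoch_zero] using (one_sub_pow_mul_invPoch_succ hq 0).symm
  | succ n ih =>
    have hne : 1 - q ^ (2 * (n + 1)) ≠ 0 := one_sub_pow_ne_zero hq (by omega)
    refine mul_left_cancel₀ hne ?_
    rw [one_sub_pow_mul_sum_antidiagonal_slaterE3 hq, ← ih]
    have hfactor : qPoch (-q) q (n + 1) * qPoch q q (n + 1)
        = (1 - q ^ (2 * (n + 1))) * (qPoch (-q) q n * qPoch q q n) := by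
      simp only [qPoch, prod_range_succ]
      ring
    beta_reduce
    rw [hfactor, mul_inv, mul_inv_cancel_left₀ hne]

lemma summable_mul_comp_add {ι : Type*} {g : ι → ℂ} {f : ℕ → ℂ} (hg : Summable g)
    (hf : Summable f) (m : ι → ℕ) : Summable fun p : ι × ℕ => g p.1 * f (p.2 + m p.1) := by
  have hshift (a : ℕ) : Summable fun i => ‖f (i + a)‖ :=
    hf.norm.comp_injective (add_left_injective a)
  refine .of_norm ((summable_prod_of_nonneg fun p => norm_nonneg _).mpr ⟨fun a => ?_, ?_⟩)
  · simpa only [norm_mul] using (hshift (m a)).mul_left ‖g a‖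
  · simp only [norm_mul, tsum_mul_left]
    refine .of_nonneg_of_le (fun a => by positivity) (fun a => ?_)
      (hg.norm.mul_right (∑' i, ‖f i‖))
    refine mul_le_mul_of_nonneg_left ?_ (norm_nonneg _)
    exact tsum_comp_le_tsum_of_inj hf.norm (fun _ => norm_nonneg _) (add_left_injective (m a))

lemma hasSum_sum_antidiagonal {E : Type*} [NormedAddCommGroup E] [CompleteSpace E]
    {F : ℕ × ℕ → E} (hF : Summable F) :
    HasSum (fun n => ∑ p ∈ antidiagonal n, F p) (∑' r, ∑' i, F (r, i)) := by
  rw [← hF.tsum_prod]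
  have h := (HasAntidiagonal.sigmaAntidiagonalEquivProd (A := ℕ)).hasSum_iff.mpr hF.hasSum
  refine (h.sigma fun n => hasSum_fintype _).congr_fun fun n => ?_
  exact (sum_coe_sort _ F).symm

/-- The conjugate Bailey sequence `γ` of `δ = f`, relative to `q ^ c` and normalised as in
`IsBaileyPair`; the summation index `n ≥ r` is written `n = i + r`. -/
noncomputable def conjBailey (q : ℂ) (c : ℕ) (f : ℕ → ℂ) (r : ℕ) : ℂ :=
  ∑' i, f (i + r) * invPoch q (i + 2 * r + c) * invPoch q i

/-- The operator on sequences dual to a step along the Bailey chain relative to `q ^ c`: it performs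
the summation over the excess `i` of a part over the next part `m`. -/
noncomputable def baileyStep (q : ℂ) (c : ℕ) (f : ℕ → ℂ) (m : ℕ) : ℂ :=
  q ^ (m ^ 2 + c * m) * ∑' i, f (i + m) * invPoch q i

lemma IsBaileyPair.hasSum_mul {c : ℕ} {α β f : ℕ → ℂ} (hαβ : IsBaileyPair q c α β) (hq : ‖q‖ < 1)
    (hα : Summable α) (hf : Summable f) :
    HasSum (fun n => f n * β n) (∑' r, α r * conjBailey q c f r) := by
  obtain ⟨C, hC⟩ := exists_norm_invPoch_le hq
  have hs : Summable fun p : ℕ × ℕ => α p.1 * f (p.2 + p.1) *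
      invPoch q (p.2 + 2 * p.1 + c) * invPoch q p.2 :=
    summable_mul_of_norm_le (summable_mul_of_norm_le (summable_mul_comp_add hα hf id)
      fun _ => hC _) fun _ => hC _
  have hsum := hasSum_sum_antidiagonal hs
  simp only [mul_assoc, tsum_mul_left] at hsum
  simp only [conjBailey, mul_assoc]
  refine hsum.congr_fun fun n => ?_
  rw [hαβ n, mul_sum]
  refine sum_congr rfl fun p hp => ?_
  rw [← mem_antidiagonal.mp hp, add_comm p.1]
  ring

lemma summable_baileyStep (hq : ‖q‖ < 1) (c : ℕ) {f : ℕ → ℂ} (hf : Summable f) :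
    Summable (baileyStep q c f) := by
  obtain ⟨C, hC⟩ := exists_norm_invPoch_le hq
  have hs := summable_mul_of_norm_le (summable_mul_comp_add (summable_pow_sq_add_mul hq c) hf id)
    fun p => hC p.2
  refine hs.prod.congr fun m => ?_
  simp only [baileyStep, mul_assoc, tsum_mul_left, id]

lemma conjBailey_baileyStep (hq : ‖q‖ < 1) (c : ℕ) {f : ℕ → ℂ} (hf : Summable f) (r : ℕ) :
    conjBailey q c (baileyStep q c f) r = q ^ (r ^ 2 + c * r) * conjBailey q c f r := by
  obtain ⟨C, hC⟩ := exists_norm_invPoch_le hq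
  have hs : Summable fun p : ℕ × ℕ => q ^ ((p.1 + r) ^ 2 + c * (p.1 + r)) *
      invPoch q (p.1 + 2 * r + c) * invPoch q p.1 * f (p.2 + (p.1 + r)) * invPoch q p.2 := by
    have hg := (summable_pow_sq_add_mul hq c).comp_injective (add_left_injective r)
    have hg' := summable_mul_of_norm_le (summable_mul_of_norm_le hg fun i => hC (i + 2 * r + c)) hC
    exact summable_mul_of_norm_le (summable_mul_comp_add hg' hf (· + r)) fun _ => hC _
  have hdouble : conjBailey q c (baileyStep q c f) r
      = ∑' n, q ^ (r ^ 2 + c * r) * (f (n + r) * invPoch q (n + 2 * r + c) * invPoch q n) := by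
    have hsum := (hasSum_sum_antidiagonal hs).tsum_eq
    simp only [conjBailey, baileyStep, ← tsum_mul_left, ← tsum_mul_right]
    refine .trans (tsum_congr fun i => tsum_congr fun j => ?_)
      (hsum.symm.trans (tsum_congr fun n => ?_))
    · ring
    · rw [add_assoc n, mul_right_comm (f _), mul_assoc (f _), ← sum_antidiagonal_q_vandermonde hq,
        mul_sum, mul_sum]
      refine sum_congr rfl fun p hp => ?_
      rw [← mem_antidiagonal.mp hp]
      ring_nf
  rw [hdouble, tsum_mul_left, conjBailey]

/-- Every partition with at most `k + 1` parts arises from a unique one with at most `k` parts by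
putting in front of it a new largest part, which exceeds the old one by an arbitrary `i`. -/
def PartK.consEquiv (k : ℕ) : PartK k × ℕ ≃ PartK (k + 1) where
  toFun p := ⟨fun j => Nat.casesOn j (p.2 + p.1.1 0) p.1.1, antitone_nat_of_succ_le fun
      | 0 => Nat.le_add_left _ _
      | j + 1 => p.1.2.1 j.le_succ,
    fun
      | 0, h => absurd h (Nat.not_succ_le_zero k)
      | j + 1, h => p.1.2.2 j (Nat.le_of_succ_le_succ h)⟩
  invFun l := (⟨fun j => l.1 (j + 1), fun _ _ h => l.2.1 (Nat.succ_le_succ h),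
    fun j h => l.2.2 (j + 1) (Nat.succ_le_succ h)⟩, l.1 0 - l.1 1)
  left_inv _ := Prod.ext rfl (Nat.add_sub_cancel _ _)
  right_inv l := Subtype.ext <| funext fun
    | 0 => Nat.sub_add_cancel (l.2.1 zero_le_one)
    | _ + 1 => rfl

instance : Unique (PartK 0) where
  default := ⟨fun _ => 0, antitone_const, fun _ _ => rfl⟩
  uniq l := Subtype.ext (funext fun i => l.2.2 i i.zero_le)

lemma PartK.consEquiv_zero {k : ℕ} (p : PartK k × ℕ) :
    (PartK.consEquiv k p).1 0 = p.2 + p.1.1 0 := rfl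

lemma PartK.consEquiv_succ {k : ℕ} (p : PartK k × ℕ) (j : ℕ) :
    (PartK.consEquiv k p).1 (j + 1) = p.1.1 j := rfl

/-- The weight of the parts `l 0 ≥ l 1 ≥ ⋯ ≥ l k` produced by iterating the Bailey chain relative
to `q ^ c` on `β`, without the factor depending on the largest part alone. -/
noncomputable def chainWeight (q : ℂ) (c : ℕ) (β : ℕ → ℂ) (k : ℕ) (l : ℕ → ℕ) : ℂ :=
  (∏ i ∈ range k, q ^ (l (i + 1) ^ 2 + c * l (i + 1)) * invPoch q (l i - l (i + 1))) * β (l k)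

lemma chainWeight_succ_consEquiv (c : ℕ) (β : ℕ → ℂ) (k : ℕ) (p : PartK (k + 1) × ℕ) :
    chainWeight q c β (k + 1) (PartK.consEquiv (k + 1) p).1
      = q ^ (p.1.1 0 ^ 2 + c * p.1.1 0) * chainWeight q c β k p.1.1 * invPoch q p.2 := by
  simp only [chainWeight, prod_range_succ', PartK.consEquiv_zero, PartK.consEquiv_succ,
    Nat.add_sub_cancel]
  ring

theorem IsBaileyPair.hasSum_mul_chainWeight {c : ℕ} {α β : ℕ → ℂ} (hαβ : IsBaileyPair q c α β)
    (hq : ‖q‖ < 1) (hα : Summable α) (k : ℕ) {f : ℕ → ℂ} (hf : Summable f) :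
    HasSum (fun l : PartK (k + 1) => f (l.1 0) * chainWeight q c β k l.1)
      (∑' r, α r * (q ^ (k * (r ^ 2 + c * r)) * conjBailey q c f r)) := by
  induction k generalizing f with
  | zero =>
    let e : ℕ ≃ PartK 1 := (Equiv.uniqueProd ℕ (PartK 0)).symm.trans (PartK.consEquiv 0)
    rw [← e.hasSum_iff]
    simpa [chainWeight, e, PartK.consEquiv_zero, default] using! hαβ.hasSum_mul hq hα hf
  | succ k ih =>
    obtain ⟨C, hC⟩ := exists_norm_invPoch_le hq
    have hs : Summable fun p : PartK (k + 1) × ℕ =>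
        q ^ (p.1.1 0 ^ 2 + c * p.1.1 0) * chainWeight q c β k p.1.1 * f (p.2 + p.1.1 0) *
          invPoch q p.2 :=
      summable_mul_of_norm_le (summable_mul_comp_add (ih (summable_pow_sq_add_mul hq c)).summable
        hf (·.1 0)) fun _ => hC _
    have hfiber : HasSum (fun l : PartK (k + 1) => ∑' i, q ^ (l.1 0 ^ 2 + c * l.1 0) *
          chainWeight q c β k l.1 * f (i + l.1 0) * invPoch q i)
        (∑' r, α r * (q ^ ((k + 1) * (r ^ 2 + c * r)) * conjBailey q c f r)) := by
      convert ih (summable_baileyStep hq c hf) using 1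
      · funext l
        simp only [baileyStep, mul_assoc, tsum_mul_left]
        ring
      · refine tsum_congr fun r => ?_
        rw [conjBailey_baileyStep hq c hf]
        ring
    rw [← (PartK.consEquiv (k + 1)).hasSum_iff, ← hs.tsum_prod.trans hfiber.tsum_eq]
    refine hs.hasSum.congr_fun fun p => ?_
    rw [Function.comp_apply, chainWeight_succ_consEquiv, PartK.consEquiv_zero]
    ring

lemma hasSum_pow_two_mul_choose_two_mul_invPoch (hq : ‖q‖ < 1) (b : ℕ) :
    HasSum (fun n => q ^ (2 * n.choose 2 + b * n) * invPoch q (n + b) * invPoch q n)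
      ((1 + q ^ b) * (qPochInf q q)⁻¹) := by
  have hrest : HasSum
      (fun n => q ^ (2 * n.choose 2 + b * n) * invPoch q (n + b) * ((1 - q ^ n) * invPoch q n))
      (q ^ b * (qPochInf q q)⁻¹) := by
    rw [← hasSum_nat_add_iff' 1]
    simp only [one_sub_pow_mul_invPoch_succ hq, range_one, sum_singleton, pow_zero, sub_self,
      zero_mul, mul_zero, sub_zero]
    refine ((hasSum_durfee hq (b + 1)).mul_left (q ^ b)).congr_fun fun n => ?_
    rw [choose_two_succ, sq_eq_two_mul_choose_two_add, add_assoc n 1, add_comm 1 b]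
    ring
  rw [one_add_mul]
  refine ((hasSum_durfee hq b).add hrest).congr_fun fun n => ?_
  rw [sq_eq_two_mul_choose_two_add]
  ring

lemma hasSum_pow_two_mul_choose_two_mul_invPoch_succ (hq : ‖q‖ < 1) (b : ℕ) :
    HasSum (fun n => q ^ (2 * n.choose 2 + b * n) * invPoch q (n + b + 1) * invPoch q n)
      ((1 + q ^ b + q ^ (b + 1) * (1 + q ^ (b + 1))) * (qPochInf q q)⁻¹) := by
  rw [add_mul, mul_assoc (q ^ (b + 1))]
  refine ((hasSum_pow_two_mul_choose_two_mul_invPoch hq b).add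
    ((hasSum_pow_two_mul_choose_two_mul_invPoch hq (b + 1)).mul_left _)).congr_fun fun n => ?_
  rw [← one_sub_pow_mul_invPoch_succ hq (n + b), add_assoc n b 1]
  ring

lemma conjBailey_pow_two_mul_choose_two (hq : ‖q‖ < 1) (r : ℕ) :
    conjBailey q 1 (fun n => q ^ (2 * n.choose 2) * (1 - q ^ (2 * n))) r
      = q ^ (2 * r.choose 2) * (1 + q ^ (2 * r + 1) + q ^ (2 * (2 * r + 1))) *
          (qPochInf q q)⁻¹ := by
  have hsum := ((hasSum_pow_two_mul_choose_two_mul_invPoch_succ hq (2 * r)).mul_left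
    (q ^ (2 * r.choose 2))).sub
      ((hasSum_durfee hq (2 * r + 1)).mul_left (q ^ (2 * r.choose 2 + 2 * r)))
  convert hsum.tsum_eq using 1
  · refine tsum_congr fun i => ?_
    beta_reduce
    rw [add_choose_two_eq, sq_eq_two_mul_choose_two_add, add_assoc i]
    ring
  · ring

lemma summable_pow_two_mul_choose_two_mul (hq : ‖q‖ < 1) :
    Summable fun n => q ^ (2 * n.choose 2) * (1 - q ^ (2 * n)) := by
  have hs := summable_pow_mul_pow_choose_two (norm_pow_lt_one hq two_ne_zero) 1
  refine (hs.sub (summable_pow_sq_add_mul hq 1)).congr fun n => ?_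
  rw [sq_eq_two_mul_choose_two_add]
  ring

lemma summable_neg_one_pow_mul_pow_sq (hq : ‖q‖ < 1) :
    Summable fun r : ℕ => (-1) ^ r * q ^ r ^ 2 * (1 - q ^ (2 * r + 1)) := by
  refine (summable_mul_of_norm_le (g := fun r => (-1) ^ r * (1 - q ^ (2 * r + 1))) (C := 1 + 1)
    (summable_pow_sq_add_mul hq 0) fun r => ?_).congr fun r => by ring
  rw [norm_mul, norm_pow, norm_neg, norm_one, one_pow, one_mul]
  refine (norm_sub_le _ _).trans ?_
  rw [norm_one, norm_pow]
  gcongr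
  exact pow_le_one₀ (norm_nonneg q) hq.le

lemma summand_eq_mul_chainWeight (q : ℂ) (k : ℕ) (l : PartK (k + 1)) :
    q ^ (wtK (k + 1) l + n2K (k + 1) l - 2 * l.1 0) * (1 - q ^ (2 * l.1 0)) /
        (qPoch (-q) q (l.1 k) * pochK q q (k + 1) l)
      = q ^ (2 * (l.1 0).choose 2) * (1 - q ^ (2 * l.1 0)) *
          chainWeight q 1 (fun n => (qPoch (-q) q n * qPoch q q n)⁻¹) k l.1 := by
  have hpoch : pochK q q (k + 1) l
      = (∏ i ∈ range k, qPoch q q (l.1 i - l.1 (i + 1))) * qPoch q q (l.1 k) := by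
    rw [pochK, prod_range_succ, l.2.2 _ le_rfl, Nat.sub_zero]
  have hexp : wtK (k + 1) l + n2K (k + 1) l - 2 * l.1 0
      = 2 * (l.1 0).choose 2 + ∑ i ∈ range k, (l.1 (i + 1) ^ 2 + 1 * l.1 (i + 1)) := by
    simp only [wtK, n2K, sum_range_succ', sum_add_distrib, one_mul]
    have := sq_eq_two_mul_choose_two_add (l.1 0)
    omega
  rw [hpoch, hexp, pow_add, ← prod_pow_eq_pow_sum, chainWeight, prod_mul_distrib]
  simp only [invPoch, prod_inv_distrib]
  ring

end

/-- Identity (25): for `k ≥ 1`, `|q| < 1`,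
`Σ_{l(λ)≤k} q^{|λ|+n_2(λ)-2λ_1} (1-q^{2λ_1}) / ((-q;q)_{λ_k} (q;q)_λ)
  = (q^{2k+2},q^{2k-1},q^3;q^{2k+2})_∞ / (q;q)_∞`. -/
theorem rr_type_25 (k : ℕ) (hk : 1 ≤ k) (q : ℂ) (hq : ‖q‖ < 1) :
    ∑' lam : PartK k,
        q ^ (wtK k lam + n2K k lam - 2 * lam.1 0) * (1 - q ^ (2 * lam.1 0)) /
          (qPoch (-q) q (lam.1 (k - 1)) * pochK q q k lam)
      = qPochInf (q ^ (2 * k + 2)) (q ^ (2 * k + 2)) *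
          qPochInf (q ^ (2 * k - 1)) (q ^ (2 * k + 2)) *
          qPochInf (q ^ 3) (q ^ (2 * k + 2)) / qPochInf q q := by
  obtain ⟨k, rfl⟩ := Nat.exists_eq_add_of_le' hk
  have hQ : ‖q ^ (2 * (k + 1) + 2)‖ < 1 := norm_pow_lt_one hq (by omega)
  have hab : q ^ (2 * k + 1) * q ^ 3 = q ^ (2 * (k + 1) + 2) := by ring
  simp only [Nat.add_sub_cancel, summand_eq_mul_chainWeight]
  rw [((isBaileyPair_slaterE3 hq).hasSum_mul_chainWeight hq (summable_neg_one_pow_mul_pow_sq hq) k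
    (summable_pow_two_mul_choose_two_mul hq)).tsum_eq, show 2 * (k + 1) - 1 = 2 * k + 1 by omega,
    div_eq_mul_inv, ← ((hasSum_jacobi_triple_product hQ hab).mul_right _).tsum_eq]
  refine tsum_congr fun r => ?_
  rw [conjBailey_pow_two_mul_choose_two hq, choose_two_succ, sq_eq_two_mul_choose_two_add]
  ring
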